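/- Proposition 2.12(2): Let ω be a symplectic bilinear form on V and A a Lagrangian fanning frame, with horizontal frame H_i(t) = P_h(t)ȧ_i(t). Then the horizontal space h(t) = ker(Ḟ(t) − id_V) is a Lagrangian subspace of (V, ω) for every t; explicitly, ω(H_i(t), H_j(t)) = 0 for all i, j, and the vectors H_1(t), …, H_n(t) form a basis of h(t). -/

import Mathlib

/-- If `F a i = 0` and `F (a' i) = a i` for a basis `(a, a')`, then the kernel of `F` is
contained in the span of `a`. -/
theorem mem_span_of_fundamental_eq_zero {V ι : Type*} [AddCommGroup V] [Module ℝ V] [Fintype ι]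
    {a a' : ι → V} (hli : LinearIndependent ℝ a)
    (hspan : Submodule.span ℝ (Set.range (Sum.elim a a')) = ⊤)
    {F : V →ₗ[ℝ] V} (h0 : ∀ i, F (a i) = 0) (h1 : ∀ i, F (a' i) = a i)
    {v : V} (hv : F v = 0) : v ∈ Submodule.span ℝ (Set.range a) := by
  have hmem : v ∈ Submodule.span ℝ (Set.range (Sum.elim a a')) := hspan ▸ Submodule.mem_top
  obtain ⟨c, rfl⟩ := (Submodule.mem_span_range_iff_exists_fun ℝ).1 hmem
  simp only [Fintype.sum_sum_type, Sum.elim_inl, Sum.elim_inr, map_add, map_sum, map_smul, h0, h1,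
    smul_zero, Finset.sum_const_zero, zero_add] at hv ⊢
  have hc := Fintype.linearIndependent_iff.1 hli _ hv
  refine (Submodule.mem_span_range_iff_exists_fun ℝ).2 ⟨fun i => c (Sum.inl i), ?_⟩
  simp [hc]

/-- Leibniz rule for a bilinear form on a finite-dimensional space. -/
theorem hasDerivAt_bilinear {V : Type*} [NormedAddCommGroup V] [NormedSpace ℝ V]
    [FiniteDimensional ℝ V] (ω : V →ₗ[ℝ] V →ₗ[ℝ] ℝ) {f g : ℝ → V} {f' g' : V} {t : ℝ}
    (hf : HasDerivAt f f' t) (hg : HasDerivAt g g' t) :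
    HasDerivAt (fun s => ω (f s) (g s)) (ω f' (g t) + ω (f t) g') t := by
  let B : V →L[ℝ] V →L[ℝ] ℝ :=
    LinearMap.toContinuousLinearMap (LinearMap.toContinuousLinearMap.toLinearMap ∘ₗ ω)
  have hB (x y : V) : B x y = ω x y := rfl
  have h := (B.hasFDerivAt.comp_hasDerivAt t hf).clm_apply hg
  simpa only [Function.comp_apply, hB] using h

/-- The fundamental endomorphism of a Lagrangian fanning frame is skew with respect to `ω`. -/
theorem fundamental_skew {V ι : Type*} [NormedAddCommGroup V] [NormedSpace ℝ V]
    [FiniteDimensional ℝ V] {ω : V →ₗ[ℝ] V →ₗ[ℝ] ℝ} {A A' : ℝ → ι → V}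
    (hA' : ∀ i t, HasDerivAt (fun s => A s i) (A' t i) t)
    (hspan : ∀ t, Submodule.span ℝ (Set.range (Sum.elim (A t) (A' t))) = ⊤)
    (hLag : ∀ t i j, ω (A t i) (A t j) = 0) {F : ℝ → V →L[ℝ] V}
    (hF0 : ∀ t i, F t (A t i) = 0) (hF1 : ∀ t i, F t (A' t i) = A t i) (t : ℝ) (u v : V) :
    ω (F t u) v + ω u (F t v) = 0 := by
  have key : ω ∘ₗ (F t).toLinearMap + ω.compl₂ (F t).toLinearMap = 0 := by
    refine LinearMap.ext_on_range (hspan t) fun i => LinearMap.ext_on_range (hspan t) fun j => ?_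
    rcases i with i | i <;> rcases j with j | j
    · simp [hF0]
    · simp [hF0, hF1, hLag]
    · simp [hF0, hF1, hLag]
    · have h := hasDerivAt_bilinear ω (hA' i t) (hA' j t)
      simp only [hLag] at h
      have := h.unique (hasDerivAt_const t (0 : ℝ))
      simp only [LinearMap.add_apply, LinearMap.comp_apply, LinearMap.compl₂_apply, Sum.elim_inr,
        ContinuousLinearMap.coe_coe, hF1, LinearMap.zero_apply]
      linarith
  simpa using LinearMap.congr_fun₂ key u v

/-- **Proposition 2.12(2).**  If `ω` is a symplectic bilinear form on `V` and `A` a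
Lagrangian fanning frame with horizontal frame `H_i(t) = P_h(t) ȧ_i(t)`, then the
horizontal space `h(t) = ker(Ḟ(t) − id)` is Lagrangian for every `t`: explicitly,
`ω(H_i(t), H_j(t)) = 0` for all `i, j`, the vectors `H_1(t), …, H_n(t)` form a basis of
`h(t)`, and `ω` vanishes identically on `h(t) × h(t)`. -/
theorem prop2_12_part2
    {V : Type*} [NormedAddCommGroup V] [NormedSpace ℝ V] [FiniteDimensional ℝ V]
    {n : ℕ} (hn : 0 < n) (hdim : Module.finrank ℝ V = 2 * n)
    (ω : V →ₗ[ℝ] V →ₗ[ℝ] ℝ)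
    (halt : ∀ v, ω v v = 0)
    (hnd : ∀ v, (∀ w, ω v w = 0) → v = 0)
    (A A' : ℝ → Fin n → V)
    (hA : ∀ i, ContDiff ℝ (⊤ : ℕ∞) (fun t => A t i))
    (hA' : ∀ i t, HasDerivAt (fun s => A s i) (A' t i) t)
    (hfan : ∀ t, LinearIndependent ℝ (Sum.elim (A t) (A' t)) ∧
      Submodule.span ℝ (Set.range (Sum.elim (A t) (A' t))) = ⊤)
    (hLag : ∀ t i j, ω (A t i) (A t j) = 0)
    (F F' : ℝ → V →L[ℝ] V)
    (hF0 : ∀ t i, F t (A t i) = 0)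
    (hF1 : ∀ t i, F t (A' t i) = A t i)
    (hFd : ∀ t, HasDerivAt F (F' t) t)
    (H : ℝ → Fin n → V)
    (hH : ∀ t i, H t i = (1/2 : ℝ) • (A' t i + F' t (A' t i))) :
    ∀ t, (∀ i j, ω (H t i) (H t j) = 0) ∧
      LinearIndependent ℝ (H t) ∧
      Submodule.span ℝ (Set.range (H t)) =
        LinearMap.ker (F' t - ContinuousLinearMap.id ℝ V).toLinearMap ∧
      (∀ u ∈ LinearMap.ker (F' t - ContinuousLinearMap.id ℝ V).toLinearMap,
        ∀ v ∈ LinearMap.ker (F' t - ContinuousLinearMap.id ℝ V).toLinearMap, ω u v = 0) := by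
  intro t
  have hFv (v : V) : HasDerivAt (fun s => F s v) (F' t v) t := by
    simpa using (hFd t).clm_apply (hasDerivAt_const t v)
  have hF'A (i : Fin n) : F' t (A t i) = -A t i := by
    have h := (hFd t).clm_apply (hA' i t)
    simp only [hF0, hF1] at h
    exact eq_neg_of_add_eq_zero_left (h.unique (hasDerivAt_const t (0 : V)))
  have hFF (s : ℝ) (v : V) : F s (F s v) = 0 := by
    have : (F s).toLinearMap ∘ₗ (F s).toLinearMap = 0 :=
      LinearMap.ext_on_range (hfan s).2 fun i => by rcases i with i | i <;> simp [hF0, hF1]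
    exact LinearMap.congr_fun this v
  have hFF' (v : V) : F' t (F t v) + F t (F' t v) = 0 := by
    have h := (hFd t).clm_apply (hFv v)
    simp only [hFF] at h
    exact h.unique (hasDerivAt_const t (0 : V))
  have hFF'A' (i : Fin n) : F t (F' t (A' t i)) = A t i := by
    have h := hFF' (A' t i)
    rw [hF1, hF'A] at h
    exact (neg_add_eq_zero.1 h).symm
  have hliA : LinearIndependent ℝ (A t) := (hfan t).1.comp _ Sum.inl_injective
  have hF'neg (v : V) (hv : F t v = 0) : F' t v = -v := by
    have hmem := mem_span_of_fundamental_eq_zero (F := (F t).toLinearMap) hliA (hfan t).2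
      (hF0 t) (hF1 t) hv
    obtain ⟨c, rfl⟩ := (Submodule.mem_span_range_iff_exists_fun ℝ).1 hmem
    simp [hF'A]
  have hF'F'A' (i : Fin n) : F' t (F' t (A' t i)) = A' t i := by
    have h := hF'neg (F' t (A' t i) - A' t i) (by rw [map_sub, hFF'A', hF1, sub_self])
    rw [map_sub, neg_sub] at h
    exact sub_left_inj.1 h
  have hF'H (i : Fin n) : F' t (H t i) = H t i := by
    rw [hH, map_smul, map_add, hF'F'A', add_comm]
  have hFH (i : Fin n) : F t (H t i) = A t i := by
    rw [hH, map_smul, map_add, hFF'A', hF1, ← two_smul ℝ, smul_smul]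
    norm_num
  have hskew (u v : V) : ω (F' t u) v + ω u (F' t v) = 0 := by
    have h := (hasDerivAt_bilinear ω (hFv u) (hasDerivAt_const t v)).add
      (hasDerivAt_bilinear ω (hasDerivAt_const t u) (hFv v))
    have hzero : ((fun s => ω (F s u) v) + fun s => ω u (F s v)) = fun _ => 0 :=
      funext fun s => fundamental_skew hA' (fun t => (hfan t).2) hLag hF0 hF1 s u v
    rw [hzero] at h
    simpa using h.unique (hasDerivAt_const t (0 : ℝ))
  have hiso (u v : V) (hu : F' t u = u) (hv : F' t v = v) : ω u v = 0 := by
    have h := hskew u v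
    rw [hu, hv] at h
    linarith
  have hker (v : V) :
      v ∈ LinearMap.ker (F' t - ContinuousLinearMap.id ℝ V).toLinearMap ↔ F' t v = v := by
    simp [sub_eq_zero]
  refine ⟨fun i j => hiso _ _ (hF'H i) (hF'H j), ?_, le_antisymm ?_ fun v hv => ?_,
    fun u hu v hv => hiso u v ((hker u).1 hu) ((hker v).1 hv)⟩
  · refine LinearIndependent.of_comp (F t).toLinearMap ?_
    convert hliA using 1
    exact funext hFH
  · rw [Submodule.span_le]
    rintro _ ⟨i, rfl⟩
    exact (hker _).2 (hF'H i)
  · have hproj (w : V) : (1 / 2 : ℝ) • (w + F' t w) ∈ Submodule.span ℝ (Set.range (H t)) := by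
      have hmem : w ∈ Submodule.span ℝ (Set.range (Sum.elim (A t) (A' t))) :=
        (hfan t).2 ▸ Submodule.mem_top
      induction hmem using Submodule.span_induction with
      | mem x hx =>
        obtain ⟨i | i, rfl⟩ := hx
        · simp [hF'A]
        · exact Submodule.subset_span ⟨i, hH t i⟩
      | zero => simp
      | add x y _ _ hx hy =>
        rw [map_add, add_add_add_comm, smul_add]
        exact add_mem hx hy
      | smul c x _ hx =>
        rw [map_smul, ← smul_add, smul_comm]
        exact Submodule.smul_mem _ c hx
    have h := hproj v
    rwa [(hker v).1 hv, ← two_smul ℝ, smul_smul, one_div_mul_cancel two_ne_zero, one_smul] at h
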